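/- (Goursat transformation.) Let f, f★ : U → Im ℍ be smooth with f_x·f★_y = f_y·f★_x on U (hence also f★_x·f_y = f★_y·f_x), and let m ∈ Im ℍ be such that f★(p) ≠ m for all p ∈ U. Define ω₁ := −(f★ − m)·f_x·(f★ − m) and ω₂ := −(f★ − m)·f_y·(f★ − m). Then: (a) ω₁ and ω₂ take values in Im ℍ; (b) the 1-form ω₁dx + ω₂dy is closed: ∂_y ω₁ = ∂_x ω₂ on U; (c) the Möbius transform g := (f★ − m)⁻¹ satisfies g_x·ω₂ = g_y·ω₁ on U. Hence any local primitive Gf of ω₁dx + ω₂dy forms a Christoffel pair with (f★ − m)⁻¹, i.e. Gf is a Goursat transform of f with dGf = −(f★ − m)·df·(f★ − m). -/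

import Mathlib

/-! Write `a = fs - m`, an imaginary-valued function with `da = dfs`. Three observations carry the
proof.

* For imaginary quaternions conjugation is negation and reverses products. Applied to the
  Christoffel relation `f_x a_y = f_y a_x` it gives the reversed relation `a_y f_x = a_x f_y`
  (`mul_comm_of_re_eq_zero`), and applied to `a b a` it gives (a).
* In `∂_y (a f_x a) = a_y f_x a + a f_xy a + a f_x a_y` (`fderiv_sandwich`) the three terms match
  those of `∂_x (a f_y a)`: the outer ones by the two Christoffel relations, the middle one by the
  symmetry of second derivatives. This is (b).
* Since `d(a⁻¹) = -a⁻¹ da a⁻¹`, the product `∂(a⁻¹) * -(a b a)` collapses to `a⁻¹ (∂a b) a`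
  (`fderiv_inv_mul_sandwich`), so (c) is the reversed Christoffel relation conjugated by `a`. -/

/- STATEMENT 3 (Goursat transformation): Let f, f★ : U → Im ℍ form a Christoffel pair
and m ∈ Im ℍ with f★ ≠ m on U. Define ω₁ := −(f★ − m)·f_x·(f★ − m) and
ω₂ := −(f★ − m)·f_y·(f★ − m). Then:
(a) ω₁, ω₂ take values in Im ℍ;
(b) ∂_y ω₁ = ∂_x ω₂ on U;
(c) g := (f★ − m)⁻¹ satisfies g_x·ω₂ = g_y·ω₁ on U;
hence any local primitive Gf of ω₁dx + ω₂dy forms a Christoffel pair with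
(f★ − m)⁻¹ (a Goursat transform of f, with dGf = −(f★ − m)·df·(f★ − m)). -/

noncomputable section
open scoped ContDiff Quaternion

abbrev HQ : Type := Quaternion ℝ

noncomputable def pdx {E : Type} [NormedAddCommGroup E] [NormedSpace ℝ E]
    (f : ℝ × ℝ → E) (p : ℝ × ℝ) : E := fderiv ℝ f p (1, 0)

noncomputable def pdy {E : Type} [NormedAddCommGroup E] [NormedSpace ℝ E]
    (f : ℝ × ℝ → E) (p : ℝ × ℝ) : E := fderiv ℝ f p (0, 1)

/-- The derivative of an imaginary-valued map on an open set is imaginary. -/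
theorem re_fderiv_eq_zero {U : Set (ℝ × ℝ)} (hU : IsOpen U) {f : ℝ × ℝ → HQ}
    (hIm : ∀ p ∈ U, (f p).re = 0) {p : ℝ × ℝ} (hp : p ∈ U)
    (hf : DifferentiableAt ℝ f p) (v : ℝ × ℝ) : (fderiv ℝ f p v).re = 0 := by
  let L : HQ →L[ℝ] ℝ := ⟨QuaternionAlgebra.reₗ _ _ _, Quaternion.continuous_re⟩
  have h1 : HasFDerivAt (fun q => L (f q)) (L.comp (fderiv ℝ f p)) p :=
    L.hasFDerivAt.comp p hf.hasFDerivAt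
  have h2 : (fun q => L (f q)) =ᶠ[nhds p] fun _ => (0 : ℝ) := by
    filter_upwards [hU.mem_nhds hp] with q hq using hIm q hq
  have h3 := h1.unique ((hasFDerivAt_const (0 : ℝ) p).congr_of_eventuallyEq h2)
  exact DFunLike.congr_fun h3 v

theorem star_eq_neg_of_re_eq_zero {a : HQ} (ha : a.re = 0) : star a = -a := by
  ext <;> simp [ha]

theorem re_sandwich_eq_zero {a b : HQ} (ha : a.re = 0) (hb : b.re = 0) :
    (-(a * b * a)).re = 0 := by
  simp only [Quaternion.re_neg, Quaternion.re_mul, Quaternion.imI_mul, Quaternion.imJ_mul,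
    Quaternion.imK_mul, ha, hb]
  ring

/-- Conjugating a relation between products of imaginary quaternions reverses the factors. -/
theorem mul_comm_of_re_eq_zero {a b c d : HQ} (ha : a.re = 0) (hb : b.re = 0) (hc : c.re = 0)
    (hd : d.re = 0) (h : a * b = c * d) : b * a = d * c := by
  have := congrArg star h
  simpa [star_mul, star_eq_neg_of_re_eq_zero, ha, hb, hc, hd] using this

theorem fderiv_sandwich {a b : ℝ × ℝ → HQ} {p : ℝ × ℝ} (ha : DifferentiableAt ℝ a p)
    (hb : DifferentiableAt ℝ b p) (v : ℝ × ℝ) :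
    fderiv ℝ (fun q => -(a q * b q * a q)) p v =
      -(fderiv ℝ a p v * b p * a p + a p * fderiv ℝ b p v * a p
        + a p * b p * fderiv ℝ a p v) := by
  have h := ((ha.hasFDerivAt.fun_mul' hb.hasFDerivAt).fun_mul' ha.hasFDerivAt).fun_neg
  rw [h.fderiv]
  simp only [neg_apply, add_apply,
    smul_apply, smul_eq_mul, MulOpposite.smul_eq_mul_unop,
    MulOpposite.unop_op]
  noncomm_ring

theorem fderiv_inv_mul_sandwich {a : ℝ × ℝ → HQ} {p : ℝ × ℝ} (ha : DifferentiableAt ℝ a p)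
    (h0 : a p ≠ 0) (v : ℝ × ℝ) (b : HQ) :
    fderiv ℝ (fun q => (a q)⁻¹) p v * -(a p * b * a p) =
      (a p)⁻¹ * (fderiv ℝ a p v * b) * a p := by
  have h : HasFDerivAt (fun q => (a q)⁻¹) _ p :=
    (hasFDerivAt_inv' (𝕜 := ℝ) h0).comp p ha.hasFDerivAt
  rw [h.fderiv]
  simp only [ContinuousLinearMap.comp_apply, neg_apply,
    ContinuousLinearMap.mulLeftRight_apply, neg_mul_neg, mul_assoc]
  rw [inv_mul_cancel_left₀ h0]

theorem goursat_transformation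
    (U : Set (ℝ × ℝ)) (hU : IsOpen U) (f fs : ℝ × ℝ → HQ) (m : HQ)
    (hf : ContDiffOn ℝ ∞ f U) (hfs : ContDiffOn ℝ ∞ fs U)
    (hfIm : ∀ p ∈ U, (f p).re = 0) (hfsIm : ∀ p ∈ U, (fs p).re = 0)
    (hmIm : m.re = 0) (hne : ∀ p ∈ U, fs p ≠ m)
    (hC : ∀ p ∈ U, pdx f p * pdy fs p = pdy f p * pdx fs p) :
    -- (a)
    (∀ p ∈ U, (-((fs p - m) * pdx f p * (fs p - m))).re = 0 ∧
              (-((fs p - m) * pdy f p * (fs p - m))).re = 0) ∧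
    -- (b)
    (∀ p ∈ U, pdy (fun q => -((fs q - m) * pdx f q * (fs q - m))) p =
              pdx (fun q => -((fs q - m) * pdy f q * (fs q - m))) p) ∧
    -- (c)
    (∀ p ∈ U, pdx (fun q => (fs q - m)⁻¹) p * (-((fs p - m) * pdy f p * (fs p - m))) =
              pdy (fun q => (fs q - m)⁻¹) p * (-((fs p - m) * pdx f p * (fs p - m)))) ∧
    -- hence: any local primitive of ω₁dx + ω₂dy is a Christoffel partner of (f★ − m)⁻¹
    (∀ (Gf : ℝ × ℝ → HQ) (V : Set (ℝ × ℝ)), IsOpen V → V ⊆ U →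
      (∀ p ∈ V, pdx Gf p = -((fs p - m) * pdx f p * (fs p - m)) ∧
                pdy Gf p = -((fs p - m) * pdy f p * (fs p - m))) →
      ∀ p ∈ V, pdx (fun q => (fs q - m)⁻¹) p * pdy Gf p =
               pdy (fun q => (fs q - m)⁻¹) p * pdx Gf p) := by
  have hfd : ∀ p ∈ U, ContDiffAt ℝ ∞ f p := fun p hp => hf.contDiffAt (hU.mem_nhds hp)
  have dfs : ∀ p ∈ U, DifferentiableAt ℝ fs p := fun p hp =>
    (hfs.contDiffAt (hU.mem_nhds hp)).differentiableAt (by simp)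
  have df : ∀ p ∈ U, DifferentiableAt ℝ f p := fun p hp => (hfd p hp).differentiableAt (by simp)
  have da : ∀ p ∈ U, DifferentiableAt ℝ (fun q => fs q - m) p := fun p hp =>
    (dfs p hp).sub_const m
  have ea : ∀ p, fderiv ℝ (fun q => fs q - m) p = fderiv ℝ fs p := fun p => fderiv_sub_const m
  have aIm : ∀ p ∈ U, (fs p - m).re = 0 := fun p hp => by simp [hfsIm p hp, hmIm]
  have fIm := fun p (hp : p ∈ U) => re_fderiv_eq_zero hU hfIm hp (df p hp)
  have fsIm := fun p (hp : p ∈ U) => re_fderiv_eq_zero hU hfsIm hp (dfs p hp)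
  have hC' : ∀ p ∈ U, pdy fs p * pdx f p = pdx fs p * pdy f p := fun p hp =>
    mul_comm_of_re_eq_zero (fIm p hp _) (fsIm p hp _) (fIm p hp _) (fsIm p hp _) (hC p hp)
  have hc : ∀ p ∈ U,
      pdx (fun q => (fs q - m)⁻¹) p * (-((fs p - m) * pdy f p * (fs p - m))) =
        pdy (fun q => (fs q - m)⁻¹) p * (-((fs p - m) * pdx f p * (fs p - m))) := by
    intro p hp
    have h0 : fs p - m ≠ 0 := sub_ne_zero.2 (hne p hp)
    have hx := fderiv_inv_mul_sandwich (da p hp) h0 (1, 0) (pdy f p)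
    have hy := fderiv_inv_mul_sandwich (da p hp) h0 (0, 1) (pdx f p)
    rw [ea] at hx hy
    have h := hC' p hp
    unfold pdx pdy at *
    rw [hx, hy, h]
  refine ⟨fun p hp => ⟨re_sandwich_eq_zero (aIm p hp) (fIm p hp _),
    re_sandwich_eq_zero (aIm p hp) (fIm p hp _)⟩, ?_, hc, ?_⟩
  · intro p hp
    have hf2 : ContDiffAt ℝ 2 f p := contDiffAt_infty.1 (hfd p hp) 2
    have d2 : DifferentiableAt ℝ (fderiv ℝ f) p :=
      (hf2.fderiv_right (m := 1) (by norm_num)).differentiableAt (by simp)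
    have hsymm : IsSymmSndFDerivAt ℝ f p := hf2.isSymmSndFDerivAt (by simp)
    have dv : ∀ v, HasFDerivAt (fun q => fderiv ℝ f q v) ((fderiv ℝ (fderiv ℝ f) p).flip v) p :=
      fun v => by simpa using d2.hasFDerivAt.clm_apply (hasFDerivAt_const v p)
    have hy := fderiv_sandwich (da p hp) (dv (1, 0)).differentiableAt (0, 1)
    have hx := fderiv_sandwich (da p hp) (dv (0, 1)).differentiableAt (1, 0)
    rw [ea, (dv _).fderiv, ContinuousLinearMap.flip_apply] at hx hy
    have h1 := hC p hp
    have h2 := hC' p hp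
    unfold pdx pdy at *
    rw [hy, hx, hsymm (0, 1) (1, 0), h2, mul_assoc (fs p - m) (fderiv ℝ f p (1, 0)), h1,
      ← mul_assoc (fs p - m) (fderiv ℝ f p (0, 1))]
  · intro Gf V _ hVU hG p hp
    rw [(hG p hp).1, (hG p hp).2]
    exact hc p (hVU hp)

end
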